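/- Every spanning tree T of G has diameter at least twice the generalized radius of G: D(T) ≥ 2·R_gen(G), where R_gen(G) is the infimum, over edges e = (u,v) of G and α ∈ [0, ω(e)], of max_{z∈V} min(α + d_G(u,z), ω(e) − α + d_G(v,z)). -/

import Mathlib

/-- The weight of a walk: the sum of the weights of its edges. -/
noncomputable def walkWeight {V : Type*} (w : V → V → ℝ) {G : SimpleGraph V} {u v : V}
    (p : G.Walk u v) : ℝ :=
  (p.darts.map fun d => w d.toProd.1 d.toProd.2).sum

/-- The weighted distance between two vertices: the least weight of a walk joining them. -/
noncomputable def wdist {V : Type*} (G : SimpleGraph V) (w : V → V → ℝ) (u v : V) : ℝ :=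
  sInf {x : ℝ | ∃ p : G.Walk u v, walkWeight w p = x}


lemma walkWeight_cons' {V : Type*} (w : V → V → ℝ) {G : SimpleGraph V} {u v x : V}
    (h : G.Adj u v) (p : G.Walk v x) :
    walkWeight w (SimpleGraph.Walk.cons h p) = w u v + walkWeight w p := by
  simp [walkWeight]

lemma walkWeight_nonneg' {V : Type*} (w : V → V → ℝ) {G : SimpleGraph V}
    (hw : ∀ a b : V, G.Adj a b → 0 < w a b) {u v : V} (p : G.Walk u v) :
    0 ≤ walkWeight w p := by
  induction p with
  | nil => simp [walkWeight]
  | cons h p ih => rw [walkWeight_cons']; linarith [hw _ _ h]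

lemma wdist_le' {V : Type*} (w : V → V → ℝ) {G : SimpleGraph V}
    (hw : ∀ a b : V, G.Adj a b → 0 < w a b) {u v : V} (p : G.Walk u v) :
    wdist G w u v ≤ walkWeight w p :=
  csInf_le ⟨0, by rintro _ ⟨q, rfl⟩; exact walkWeight_nonneg' w hw q⟩ ⟨p, rfl⟩

lemma le_wdist' {V : Type*} (w : V → V → ℝ) {G : SimpleGraph V} (hG : G.Connected)
    {u v : V} {c : ℝ} (h : ∀ p : G.Walk u v, c ≤ walkWeight w p) :
    c ≤ wdist G w u v := by
  obtain ⟨p⟩ := hG.preconnected u v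
  refine le_csInf ⟨_, p, rfl⟩ ?_
  rintro _ ⟨q, rfl⟩
  exact h q

lemma wdist_nonneg' {V : Type*} (w : V → V → ℝ) {G : SimpleGraph V} (hG : G.Connected)
    (hw : ∀ a b : V, G.Adj a b → 0 < w a b) (u v : V) : 0 ≤ wdist G w u v :=
  le_wdist' w hG fun p => walkWeight_nonneg' w hw p

lemma wdist_self' {V : Type*} (w : V → V → ℝ) {G : SimpleGraph V} (hG : G.Connected)
    (hw : ∀ a b : V, G.Adj a b → 0 < w a b) (u : V) : wdist G w u u = 0 := by
  refine le_antisymm ?_ (wdist_nonneg' w hG hw u u)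
  simpa [walkWeight] using wdist_le' w hw (SimpleGraph.Walk.nil : G.Walk u u)

lemma wdist_triangle' {V : Type*} (w : V → V → ℝ) {G : SimpleGraph V} (hG : G.Connected)
    (hw : ∀ a b : V, G.Adj a b → 0 < w a b) (u x v : V) :
    wdist G w u v ≤ wdist G w u x + wdist G w x v := by
  rw [← sub_le_iff_le_add]
  refine le_wdist' w hG fun p => ?_
  rw [sub_le_comm]
  refine le_wdist' w hG fun q => ?_
  have := wdist_le' w hw (p.append q)
  have h2 : walkWeight w (p.append q) = walkWeight w p + walkWeight w q := by
    simp [walkWeight]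
  linarith

lemma wdist_adj' {V : Type*} (w : V → V → ℝ) {G : SimpleGraph V}
    (hw : ∀ a b : V, G.Adj a b → 0 < w a b) {u v : V} (h : G.Adj u v) :
    wdist G w u v ≤ w u v := by
  simpa [walkWeight] using wdist_le' w hw h.toWalk

lemma wdist_symm_le' {V : Type*} (w : V → V → ℝ) {G : SimpleGraph V} (hG : G.Connected)
    (hw : ∀ a b : V, G.Adj a b → 0 < w a b) (hws : ∀ a b : V, w a b = w b a) (u v : V) :
    wdist G w u v ≤ wdist G w v u := by
  refine le_wdist' w hG fun p => ?_
  induction p with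
  | nil => rw [wdist_self' w hG hw]; simp [walkWeight]
  | @cons a b c h p ih =>
    rw [walkWeight_cons']
    have := wdist_triangle' w hG hw c b a
    have := wdist_adj' w hw h.symm
    have := hws a b
    linarith

lemma wdist_mono' {V : Type*} (w : V → V → ℝ) {G T : SimpleGraph V} (hT : T.Connected)
    (hTG : T ≤ G) (hw : ∀ a b : V, G.Adj a b → 0 < w a b) (u v : V) :
    wdist G w u v ≤ wdist T w u v := by
  refine le_wdist' w hT fun p => ?_
  have := wdist_le' w hw (p.mapLe hTG)
  have h2 : walkWeight w (p.mapLe hTG) = walkWeight w p := by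
    clear this
    induction p with
    | nil => simp [walkWeight]
    | cons h p ih =>
      rw [walkWeight_cons', ← ih]
      exact walkWeight_cons' _ _ _
  linarith

/-- A walk that leaves a set whose only boundary edge is `(a,b)` is long. -/
lemma cross' {V : Type*} (w : V → V → ℝ) {T : SimpleGraph V} (hT : T.Connected)
    (hw : ∀ a b : V, T.Adj a b → 0 < w a b) (S : Set V) (a b : V)
    (hS : ∀ x y, T.Adj x y → x ∈ S → y ∉ S → x = a ∧ y = b) {x z : V}
    (hx : x ∈ S) (hz : z ∉ S) :
    wdist T w x a + w a b + wdist T w b z ≤ wdist T w x z := by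
  refine le_wdist' w hT fun p => ?_
  induction p with
  | nil => exact absurd hx hz
  | @cons x y z h p ih =>
    rw [walkWeight_cons']
    by_cases hy : y ∈ S
    · have := ih hy hz
      have := wdist_triangle' w hT hw x y a
      have := wdist_adj' w hw h
      linarith
    · obtain ⟨rfl, rfl⟩ := hS x y h hx hy
      rw [wdist_self' w hT hw]
      have := wdist_le' w hw p
      linarith

lemma reach_end' {V : Type*} {T : SimpleGraph V} {u v : V} (p : T.Walk u v) (hp : p.IsPath)
    (d : T.Dart) (hd : d ∈ p.darts) : (T.deleteEdges {d.edge}).Reachable d.snd v := by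
  induction p with
  | nil => simp at hd
  | @cons x y z h p ih =>
    rw [SimpleGraph.Walk.darts_cons, List.mem_cons] at hd
    rcases hd with rfl | hd
    · have h1 := hp.isTrail.edges_nodup
      rw [SimpleGraph.Walk.edges_cons, List.nodup_cons] at h1
      refine ⟨p.toDeleteEdges _ ?_⟩
      intro e he hh
      rw [Set.mem_singleton_iff] at hh
      subst hh
      exact h1.1 he
    · exact ih hp.of_cons hd

/-- Every spanning tree `T` of `G` has diameter at least twice the generalized
radius of `G`: `D(T) ≥ 2 · R_gen(G)`, where `R_gen(G)` is the infimum over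
edges `e = (u,v)` of `G` and `α ∈ [0, ω(u,v)]` of
`B_e(α) = max_{z ∈ V} min (α + d_G(u,z)) (ω(u,v) - α + d_G(v,z))`. -/
theorem stmt15 {V : Type*} [Fintype V] (G : SimpleGraph V) (hG : G.Connected)
    (w : V → V → ℝ) (hw : ∀ a b : V, G.Adj a b → 0 < w a b)
    (hws : ∀ a b : V, w a b = w b a)
    (hE : ∃ a b : V, G.Adj a b)
    (T : SimpleGraph V) (hTG : T ≤ G) (hT : T.IsTree) :
    2 * sInf {x : ℝ | ∃ a b : V, G.Adj a b ∧ ∃ α ∈ Set.Icc 0 (w a b),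
        x = ⨆ z : V, min (α + wdist G w a z) (w a b - α + wdist G w b z)} ≤
      ⨆ u : V, ⨆ v : V, wdist T w u v := by
  classical
  have hTc := hT.connected
  have hwT : ∀ a b : V, T.Adj a b → 0 < w a b := fun a b h => hw a b (hTG h)
  have : Nonempty V := hG.nonempty
  set D := ⨆ u : V, ⨆ v : V, wdist T w u v with hD
  have hle : ∀ u v, wdist T w u v ≤ D := fun u v =>
    (le_ciSup (f := fun v => wdist T w u v) (Set.finite_range _).bddAbove v).trans
      (le_ciSup (f := fun u => ⨆ v, wdist T w u v) (Set.finite_range _).bddAbove u)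
  obtain ⟨u, hu⟩ := exists_eq_ciSup_of_finite (f := fun u => ⨆ v, wdist T w u v)
  obtain ⟨v, hv⟩ := exists_eq_ciSup_of_finite (f := fun v => wdist T w u v)
  have huv : wdist T w u v = D := by rw [hD, ← hu]; exact hv
  -- sides of an edge
  let S : V → V → Set V := fun a b => {x | (T.deleteEdges {s(a, b)}).Reachable a x}
  have hSb : ∀ a b, T.Adj a b → b ∉ S a b := by
    intro a b hab
    have := SimpleGraph.isAcyclic_iff_forall_adj_isBridge.1 hT.isAcyclic hab
    rw [SimpleGraph.isBridge_iff] at this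
    first | exact this.2 | exact this
  have hSs : ∀ a b, ∀ x y, T.Adj x y → x ∈ S a b → y ∉ S a b → s(x, y) = s(a, b) := by
    intro a b x y hxy hx hy
    by_contra hne
    refine hy (SimpleGraph.Reachable.trans hx (SimpleGraph.Adj.reachable ?_))
    rw [SimpleGraph.deleteEdges_adj]
    exact ⟨hxy, hne⟩
  have haS : ∀ a b, a ∈ S a b := fun a b => SimpleGraph.Reachable.refl _
  have hS1 : ∀ a b, T.Adj a b → ∀ x y, T.Adj x y → x ∈ S a b → y ∉ S a b → x = a ∧ y = b := by
    intro a b hab x y hxy hx hy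
    rcases Sym2.eq_iff.1 (hSs a b x y hxy hx hy) with h | ⟨rfl, rfl⟩
    · exact h
    · exact absurd hx (hSb _ _ hab)
  have hS2 : ∀ a b, T.Adj a b → ∀ x y, T.Adj x y → x ∈ (S a b)ᶜ → y ∉ (S a b)ᶜ →
      x = b ∧ y = a := by
    intro a b hab x y hxy hx hy
    exact (hS1 a b hab y x hxy.symm (not_not.1 hy) hx).symm
  have hDpos : 0 < D := by
    obtain ⟨a, b, hab⟩ := hE
    obtain ⟨p⟩ := hTc.preconnected a b
    cases p with
    | nil => exact absurd hab (G.irrefl)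
    | @cons _ c _ h p =>
      have h1 := cross' w hTc hwT (S a c) a c (hS1 a c h) (haS a c) (hSb a c h)
      have := wdist_nonneg' w hTc hwT a a
      have := wdist_nonneg' w hTc hwT c c
      have := hwT _ _ h
      have := hle a c
      linarith
  obtain ⟨p, hp⟩ := hTc.exists_isPath u v
  obtain ⟨d, hd, hd1, hd2⟩ := p.exists_boundary_dart {x | wdist T w u x ≤ D / 2}
    (by simp only [Set.mem_ofPred_eq, wdist_self' w hTc hwT]; linarith)
    (by simp only [Set.mem_ofPred_eq, huv]; linarith)
  have hre := reach_end' p hp d hd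
  obtain ⟨⟨a, b⟩, hab⟩ := d
  simp only [Set.mem_ofPred_eq, not_le] at hd1 hd2
  change (T.deleteEdges {s(a, b)}).Reachable b v at hre
  change T.Adj a b at hab
  have hvS : v ∉ S a b := fun h => hSb a b hab (SimpleGraph.Reachable.trans h hre.symm)
  have huS : u ∈ S a b := by
    by_contra h
    have h1 := cross' w hTc hwT (S a b)ᶜ b a (hS2 a b hab) h (not_not.2 (haS a b))
    have := wdist_nonneg' w hTc hwT a a
    have := hwT _ _ hab.symm
    linarith
  have tri1 := wdist_triangle' w hTc hwT u a b
  have tri2 := wdist_triangle' w hTc hwT u b v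
  have adj1 := wdist_adj' w hwT hab
  have sym1 := wdist_symm_le' w hTc hwT hws b v
  have hwba := hws a b
  suffices h : sInf {x : ℝ | ∃ a b : V, G.Adj a b ∧ ∃ α ∈ Set.Icc 0 (w a b),
        x = ⨆ z : V, min (α + wdist G w a z) (w a b - α + wdist G w b z)} ≤ D / 2 by linarith
  refine le_trans (b := ⨆ z : V, min ((D / 2 - wdist T w u a) + wdist G w a z)
    (w a b - (D / 2 - wdist T w u a) + wdist G w b z)) (csInf_le ?_ ⟨a, b, hTG hab,
      D / 2 - wdist T w u a, ⟨by linarith, by linarith⟩, rfl⟩) ?_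
  · refine ⟨0, ?_⟩
    rintro _ ⟨a, b, hab, α, ⟨h0, h1⟩, rfl⟩
    refine Real.iSup_nonneg fun z => le_min ?_ ?_
    · linarith [wdist_nonneg' w hG hw a z]
    · linarith [wdist_nonneg' w hG hw b z]
  · refine ciSup_le fun z => ?_
    by_cases hz : z ∈ S a b
    · refine (min_le_left _ _).trans ?_
      have h1 := cross' w hTc hwT (S a b)ᶜ b a (hS2 a b hab) hvS (not_not.2 hz)
      linarith [hle v z, wdist_mono' w hTc hTG hw a z]
    · refine (min_le_right _ _).trans ?_
      have h1 := cross' w hTc hwT (S a b) a b (hS1 a b hab) huS hz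
      linarith [hle u z, wdist_mono' w hTc hTG hw b z]
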